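/- Let a ≥ 0 and r ≥ 2, and let r' = r/(r−1) be the conjugate exponent. There exists a constant C(a,r) > 0 such that for every t ≠ 0 and every φ ∈ 𝒮⁺ one has ‖S_a(t)φ‖_{L^r_a} ≤ C(a,r) |t|^{−(a+1)(1/2 − 1/r)} ‖φ‖_{L^{r'}_a}. -/

import Mathlib

open MeasureTheory Filter Set

noncomputable def besselJ (ν : ℂ) (z : ℝ) : ℂ :=
  ∑' k : ℕ, ((-1 : ℂ) ^ k / (Complex.Gamma (k + 1) * Complex.Gamma (ν + k + 1))) *
    ((z : ℂ) / 2) ^ (2 * (k : ℂ) + ν)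

noncomputable def DIter : ℕ → (ℝ → ℂ) → (ℝ → ℂ)
  | 0, φ => φ
  | k + 1, φ => fun x => (1 / (x : ℂ)) * deriv (DIter k φ) x

def SPlus (φ : ℝ → ℂ) : Prop :=
  ContDiffOn ℝ (⊤ : ℕ∞) φ (Ioi 0) ∧
  ∀ m k : ℕ, ∃ C : ℝ, ∀ x > (0:ℝ), ‖(x : ℂ) ^ m * DIter k φ x‖ ≤ C

noncomputable def Skernel (a x y t : ℝ) : ℂ :=
  if 0 < t then
    Complex.exp (-(Complex.I) * (((a + 1) * Real.pi / 4 : ℝ) : ℂ)) *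
      (((2 * |t|) ^ (-(a + 1) / 2) : ℝ) : ℂ) *
      (((x * y / (2 * |t|)) ^ ((1 - a) / 2) : ℝ) : ℂ) *
      besselJ (((a - 1) / 2 : ℝ) : ℂ) (x * y / (2 * |t|)) *
      Complex.exp (Complex.I * ((((x ^ 2 + y ^ 2) / (4 * |t|)) : ℝ) : ℂ))
  else
    Complex.exp ((Complex.I) * (((a + 1) * Real.pi / 4 : ℝ) : ℂ)) *
      (((2 * |t|) ^ (-(a + 1) / 2) : ℝ) : ℂ) *
      (((x * y / (2 * |t|)) ^ ((1 - a) / 2) : ℝ) : ℂ) *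
      besselJ (((a - 1) / 2 : ℝ) : ℂ) (x * y / (2 * |t|)) *
      Complex.exp (-(Complex.I) * ((((x ^ 2 + y ^ 2) / (4 * |t|)) : ℝ) : ℂ))

noncomputable def Sop (a t : ℝ) (φ : ℝ → ℂ) (x : ℝ) : ℂ :=
  ∫ y in Ioi (0:ℝ), Skernel a x y t * φ y * ((y ^ a : ℝ) : ℂ)

noncomputable def LrA (a r : ℝ) (f : ℝ → ℂ) : ℝ :=
  (∫ x in Ioi (0:ℝ), ‖f x‖ ^ r * x ^ a) ^ (1 / r)

/-!
Up to a constant of modulus `(2 |t|) ^ (-(a + 1) / 2)`, `S_a(t)` is multiplication by a quadratic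
phase, followed by the Hankel transform of order `(a - 1) / 2`, a dilation by `1 / (2 |t|)`, and
another quadratic phase. The phases are isometries, and the constant and the dilation give the power
of `|t|`, so it suffices to bound the Hankel transform from `L^{r'}_a` to `L^r_a`.

For `a ≥ 0` the energy `J² + J'²` of the normalized Bessel function `J` is nonincreasing on
`[0, ∞)`, because `J'' + (a / z) J' + J = 0`; hence `|J| ≤ J(0)` and the transform is bounded from
`L¹` to `L^∞`. It maps Gaussians to Gaussians with the same Gram matrix, and Gaussians are total, so
it contracts `L²`. The intermediate exponents follow by truncating `f` at a height depending on the
level `λ` and integrating the resulting bounds on `|{|T f| > λ}|`.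
-/

/-- The coefficients of `z ^ (-ν) * J_ν(z)`, `ν = (a - 1) / 2`, as a power series in `z ^ 2`. -/
noncomputable def besselCoeff (a : ℝ) (k : ℕ) : ℝ :=
  (-1) ^ k / (k.factorial * Real.Gamma (k + (a + 1) / 2) * 2 ^ (2 * (k : ℝ) + (a - 1) / 2))

/-- The normalized Bessel function `z ^ (-ν) * J_ν(z)` of order `ν = (a - 1) / 2`, extended to an
even entire function; it is the kernel of the Hankel transform. -/
noncomputable def normalizedBessel (a z : ℝ) : ℝ := ∑' k, besselCoeff a k * (z ^ 2) ^ k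

section Bessel

variable {a : ℝ}

theorem besselCoeff_zero_pos (ha : -1 < a) : 0 < besselCoeff a 0 := by
  have := Real.Gamma_pos_of_pos (show 0 < (a + 1) / 2 by linarith)
  simp only [besselCoeff, pow_zero, Nat.factorial_zero, Nat.cast_one, Nat.cast_zero, zero_add,
    mul_zero, one_mul]
  positivity

theorem besselCoeff_eq_mul_besselCoeff_add_two (ha : -1 < a) (k : ℕ) :
    besselCoeff a k = (2 * k + a + 1) * besselCoeff (a + 2) k := by
  have hk : 0 < (k : ℝ) + (a + 1) / 2 := by linarith [k.cast_nonneg (α := ℝ)]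
  have hΓ : Real.Gamma (k + (a + 2 + 1) / 2)
      = (k + (a + 1) / 2) * Real.Gamma (k + (a + 1) / 2) := by
    rw [← Real.Gamma_add_one hk.ne']
    congr 1
    ring
  have hpow : (2 : ℝ) ^ (2 * (k : ℝ) + (a + 2 - 1) / 2)
      = 2 ^ (2 * (k : ℝ) + (a - 1) / 2) * 2 := by
    rw [← Real.rpow_add_one two_ne_zero]
    congr 1
    ring
  rw [besselCoeff, besselCoeff, hΓ, hpow, show 2 * (k : ℝ) + a + 1 = 2 * (k + (a + 1) / 2) by ring]
  generalize (k : ℝ) + (a + 1) / 2 = s at hk ⊢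
  field_simp

theorem besselCoeff_succ (a : ℝ) (k : ℕ) :
    2 * (k + 1) * besselCoeff a (k + 1) = -besselCoeff (a + 2) k := by
  have hΓ : ((k + 1 : ℕ) : ℝ) + (a + 1) / 2 = k + (a + 2 + 1) / 2 := by
    push_cast
    ring
  have hpow : (2 : ℝ) ^ (2 * ((k + 1 : ℕ) : ℝ) + (a - 1) / 2)
      = 2 ^ (2 * (k : ℝ) + (a + 2 - 1) / 2) * 2 := by
    rw [← Real.rpow_add_one two_ne_zero]
    congr 1
    push_cast
    ring
  rw [besselCoeff, besselCoeff, hΓ, hpow, Nat.factorial_succ, pow_succ]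
  push_cast
  field_simp

theorem abs_besselCoeff_le (ha : -1 < a) (k : ℕ) :
    |besselCoeff a k| ≤ besselCoeff a 0 * ((2 * (a + 1))⁻¹ ^ k / k.factorial) := by
  have : 0 < a + 1 := by linarith
  induction k with
  | zero => simp [abs_of_pos (besselCoeff_zero_pos ha)]
  | succ k ih =>
    have hk : a + 1 ≤ 2 * k + a + 1 := by linarith [k.cast_nonneg (α := ℝ)]
    have hsucc : |besselCoeff a k| = 2 * (k + 1) * (2 * k + a + 1) * |besselCoeff a (k + 1)| := by
      rw [besselCoeff_eq_mul_besselCoeff_add_two ha, ← neg_neg (besselCoeff (a + 2) k),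
        ← besselCoeff_succ, abs_mul, abs_neg, abs_mul, abs_of_pos (by linarith : 0 < 2 * k + a + 1),
        abs_of_pos (by positivity : (0 : ℝ) < 2 * (k + 1))]
      ring
    calc |besselCoeff a (k + 1)|
        = (2 * (a + 1))⁻¹ * (2 * (k + 1) * (a + 1) * |besselCoeff a (k + 1)|) / (k + 1) := by
          field_simp
      _ ≤ (2 * (a + 1))⁻¹ * |besselCoeff a k| / (k + 1) := by
          rw [hsucc]
          gcongr
      _ ≤ (2 * (a + 1))⁻¹ * (besselCoeff a 0 * ((2 * (a + 1))⁻¹ ^ k / k.factorial)) / (k + 1) := by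
          gcongr
      _ = _ := by
          rw [Nat.factorial_succ, pow_succ]
          push_cast
          field_simp

theorem summable_besselCoeff_mul_pow (ha : -1 < a) (u : ℝ) :
    Summable fun k => besselCoeff a k * u ^ k := by
  have : 0 < a + 1 := by linarith
  refine .of_norm_bounded
    ((Real.summable_pow_div_factorial ((2 * (a + 1))⁻¹ * |u|)).mul_left (besselCoeff a 0))
    fun k => ?_
  rw [norm_mul, norm_pow, Real.norm_eq_abs, Real.norm_eq_abs, mul_pow, mul_div_right_comm,
    ← mul_assoc]
  gcongr
  exact abs_besselCoeff_le ha k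

theorem hasDerivAt_tsum_besselCoeff_mul_pow (ha : -1 < a) (u : ℝ) :
    HasDerivAt (fun u => ∑' k, besselCoeff a k * u ^ k)
      (-(∑' k, besselCoeff (a + 2) k * u ^ k) / 2) u := by
  have hterm (k : ℕ) (v : ℝ) : besselCoeff a (k + 1) * (((k + 1 : ℕ) : ℝ) * v ^ (k + 1 - 1))
      = -(besselCoeff (a + 2) k * v ^ k) / 2 := by
    rw [Nat.add_sub_cancel, ← neg_mul, ← besselCoeff_succ]
    push_cast
    ring
  have hsum (v : ℝ) : Summable fun k : ℕ => besselCoeff a k * (k * v ^ (k - 1)) := by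
    rw [← summable_nat_add_iff 1]
    simpa only [hterm] using
      (summable_besselCoeff_mul_pow (a := a + 2) (by linarith) v).neg.div_const 2
  have hu : u ∈ Metric.ball 0 (|u| + 1) := by simp
  have hderiv := hasDerivAt_tsum_of_isPreconnected (hsum (|u| + 1)).abs Metric.isOpen_ball
    (convex_ball 0 (|u| + 1)).isPreconnected
    (fun k v _ => (hasDerivAt_pow k v).const_mul (besselCoeff a k))
    (fun k v hv => ?_) hu (summable_besselCoeff_mul_pow ha u) hu
  · rwa [(hsum u).tsum_eq_zero_add, Nat.cast_zero, zero_mul, mul_zero, zero_add,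
      tsum_congr fun k => hterm k u, tsum_div_const, tsum_neg] at hderiv
  · have hv' : |v| ≤ |(|u| + 1)| := by
      rw [abs_of_pos (by positivity : 0 < |u| + 1)]
      simpa using (Metric.mem_ball.1 hv).le
    rw [Real.norm_eq_abs, abs_mul, abs_mul, abs_mul, abs_mul, abs_pow, abs_pow]
    gcongr

theorem hasDerivAt_normalizedBessel (ha : -1 < a) (z : ℝ) :
    HasDerivAt (normalizedBessel a) (-z * normalizedBessel (a + 2) z) z := by
  convert! (hasDerivAt_tsum_besselCoeff_mul_pow ha (z ^ 2)).comp z (hasDerivAt_pow 2 z) using 1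
  rw [normalizedBessel]
  push_cast
  ring

theorem continuous_normalizedBessel (ha : -1 < a) : Continuous (normalizedBessel a) :=
  continuous_iff_continuousAt.2 fun z => (hasDerivAt_normalizedBessel ha z).continuousAt

theorem normalizedBessel_zero (a : ℝ) : normalizedBessel a 0 = besselCoeff a 0 := by
  rw [normalizedBessel, tsum_eq_single 0 fun k hk => by simp [hk]]
  simp

/-- The Bessel equation, its derivatives expressed through the orders `a + 2` and `a + 4`. -/
theorem normalizedBessel_eq_sub (ha : -1 < a) (z : ℝ) :
    normalizedBessel a z
      = (a + 1) * normalizedBessel (a + 2) z - z ^ 2 * normalizedBessel (a + 4) z := by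
  have hcoeff (k : ℕ) : besselCoeff a k * (z ^ 2) ^ k
      = (a + 1) * (besselCoeff (a + 2) k * (z ^ 2) ^ k)
        + besselCoeff (a + 2) k * (2 * k) * (z ^ 2) ^ k := by
    rw [besselCoeff_eq_mul_besselCoeff_add_two ha]
    ring
  have hshift (k : ℕ) : besselCoeff (a + 2) (k + 1) * (2 * ((k + 1 : ℕ) : ℝ)) * (z ^ 2) ^ (k + 1)
      = -(z ^ 2 * (besselCoeff (a + 4) k * (z ^ 2) ^ k)) := by
    rw [show a + 4 = a + 2 + 2 by ring]
    push_cast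
    linear_combination (z ^ 2) ^ (k + 1) * besselCoeff_succ (a + 2) k
  have hsum₂ := (summable_besselCoeff_mul_pow (a := a + 2) (by linarith) (z ^ 2)).mul_left (a + 1)
  have hsum₄ := (summable_besselCoeff_mul_pow (a := a + 4) (by linarith) (z ^ 2)).mul_left (z ^ 2)
  have hsum : Summable fun k : ℕ => besselCoeff (a + 2) k * (2 * k) * (z ^ 2) ^ k := by
    rw [← summable_nat_add_iff 1]
    simpa only [hshift] using hsum₄.neg
  simp only [normalizedBessel]
  rw [tsum_congr hcoeff, hsum₂.tsum_add hsum, hsum.tsum_eq_zero_add, tsum_congr hshift, tsum_neg,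
    tsum_mul_left, tsum_mul_left]
  simp [sub_eq_add_neg]

theorem hasDerivAt_normalizedBessel_energy (ha : -1 < a) (z : ℝ) :
    HasDerivAt (fun z => normalizedBessel a z ^ 2 + z ^ 2 * normalizedBessel (a + 2) z ^ 2)
      (-(2 * a * z * normalizedBessel (a + 2) z ^ 2)) z := by
  have h₀ := hasDerivAt_normalizedBessel ha z
  have h₂ := hasDerivAt_normalizedBessel (a := a + 2) (by linarith) z
  convert! (h₀.pow 2).add ((hasDerivAt_pow 2 z).mul (h₂.pow 2)) using 1
  rw [Pi.pow_apply, normalizedBessel_eq_sub ha, show a + 2 + 2 = a + 4 by ring]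
  push_cast
  ring

theorem antitoneOn_normalizedBessel_energy (ha : 0 ≤ a) : AntitoneOn
    (fun z => normalizedBessel a z ^ 2 + z ^ 2 * normalizedBessel (a + 2) z ^ 2) (Ici 0) := by
  have hderiv := hasDerivAt_normalizedBessel_energy (show -1 < a by linarith)
  refine antitoneOn_of_hasDerivWithinAt_nonpos (convex_Ici 0)
    (fun z _ => (hderiv z).continuousAt.continuousWithinAt)
    (fun z _ => (hderiv z).hasDerivWithinAt) fun z hz => ?_
  rw [interior_Ici, mem_Ioi] at hz
  exact neg_nonpos.2 (by positivity)

theorem abs_normalizedBessel_le (ha : 0 ≤ a) (z : ℝ) :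
    |normalizedBessel a z| ≤ normalizedBessel a 0 := by
  have h₀ : 0 ≤ normalizedBessel a 0 :=
    (normalizedBessel_zero a).symm ▸ (besselCoeff_zero_pos (by linarith)).le
  have heven : normalizedBessel a |z| = normalizedBessel a z := by
    simp only [normalizedBessel, sq_abs]
  have henergy := antitoneOn_normalizedBessel_energy ha self_mem_Ici (abs_nonneg z) (abs_nonneg z)
  simp only [ne_eq, OfNat.ofNat_ne_zero, not_false_eq_true, zero_pow, zero_mul, add_zero,
    heven] at henergy
  exact abs_le_of_sq_le_sq ((le_add_of_nonneg_right (by positivity)).trans henergy) h₀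

theorem rpow_mul_besselJ_eq_normalizedBessel (a : ℝ) {z : ℝ} (hz : 0 < z) :
    ((z ^ ((1 - a) / 2) : ℝ) : ℂ) * besselJ (((a - 1) / 2 : ℝ) : ℂ) z = normalizedBessel a z := by
  rw [besselJ, normalizedBessel, ← tsum_mul_left, Complex.ofReal_tsum]
  refine tsum_congr fun k => ?_
  have hpow : ((z : ℂ) / 2) ^ (2 * (k : ℂ) + (((a - 1) / 2 : ℝ) : ℂ))
      = (((z / 2) ^ (2 * (k : ℝ) + (a - 1) / 2) : ℝ) : ℂ) := by
    rw [Complex.ofReal_cpow (by positivity)]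
    push_cast
    rfl
  have hΓ : Complex.Gamma ((((a - 1) / 2 : ℝ) : ℂ) + k + 1)
      = (Real.Gamma (k + (a + 1) / 2) : ℂ) := by
    rw [← Complex.Gamma_ofReal]
    congr 1
    push_cast
    ring
  have hreal : z ^ ((1 - a) / 2) * (z / 2) ^ (2 * (k : ℝ) + (a - 1) / 2)
      = (z ^ 2) ^ k / 2 ^ (2 * (k : ℝ) + (a - 1) / 2) := by
    rw [Real.div_rpow hz.le zero_le_two, ← mul_div_assoc, ← Real.rpow_add hz, ← pow_mul,
      ← Real.rpow_natCast]
    congr 2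
    push_cast
    ring
  rw [hpow, hΓ, Complex.Gamma_nat_eq_factorial, mul_left_comm, ← Complex.ofReal_mul (z ^ _), hreal,
    besselCoeff]
  push_cast
  field_simp

end Bessel

/-- The measure `x ^ a dx` on the half-line `(0, ∞)`, viewed as a measure on `ℝ`. -/
noncomputable def powerMeasure (a : ℝ) : Measure ℝ :=
  (volume.restrict (Ioi 0)).withDensity fun x => ENNReal.ofReal (x ^ a)

section PowerMeasure

variable {a : ℝ} {E : Type*} [NormedAddCommGroup E] [NormedSpace ℝ E]

instance (a : ℝ) : SFinite (powerMeasure a) := by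
  unfold powerMeasure
  infer_instance

theorem ae_powerMeasure_pos (a : ℝ) : ∀ᵐ x ∂powerMeasure a, 0 < x :=
  withDensity_absolutelyContinuous _ _ (ae_restrict_mem measurableSet_Ioi)

theorem setIntegral_Ioi_eq_integral_powerMeasure (a : ℝ) (f : ℝ → E) :
    ∫ x in Ioi 0, x ^ a • f x = ∫ x, f x ∂powerMeasure a := by
  rw [powerMeasure, integral_withDensity_eq_integral_toReal_smul (by fun_prop) (by simp)]
  refine setIntegral_congr_fun measurableSet_Ioi fun x hx => ?_
  rw [ENNReal.toReal_ofReal (Real.rpow_nonneg (le_of_lt hx) a)]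

theorem integrable_powerMeasure_iff {f : ℝ → E} :
    Integrable f (powerMeasure a) ↔ IntegrableOn (fun x => x ^ a • f x) (Ioi 0) := by
  rw [powerMeasure, integrable_withDensity_iff_integrable_smul' (by fun_prop) (by simp)]
  refine integrableOn_congr_fun (fun x hx => ?_) measurableSet_Ioi
  rw [ENNReal.toReal_ofReal (Real.rpow_nonneg (le_of_lt hx) a)]

theorem lintegral_powerMeasure (a : ℝ) {f : ℝ → ENNReal} (hf : Measurable f) :
    ∫⁻ x, f x ∂powerMeasure a = ∫⁻ x in Ioi 0, ENNReal.ofReal (x ^ a) * f x :=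
  lintegral_withDensity_eq_lintegral_mul _ (by fun_prop) hf

theorem map_mul_left_powerMeasure (a : ℝ) {s : ℝ} (hs : 0 < s) :
    (powerMeasure a).map (s * ·) = ENNReal.ofReal (s ^ (-(a + 1))) • powerMeasure a := by
  refine Measure.ext_of_lintegral _ fun f hf => ?_
  have hpre : (s * ·) ⁻¹' Ioi 0 = Ioi (0 : ℝ) := by
    ext x
    simp [hs]
  have hscale : ∀ x ∈ Ioi (0 : ℝ), ENNReal.ofReal (x ^ a) * f (s * x)
      = ENNReal.ofReal (s ^ (-a)) * (ENNReal.ofReal ((s * x) ^ a) * f (s * x)) := by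
    intro x hx
    rw [← mul_assoc, ← ENNReal.ofReal_mul (by positivity), Real.mul_rpow hs.le (le_of_lt hx),
      ← mul_assoc, ← Real.rpow_add hs, neg_add_cancel, Real.rpow_zero, one_mul]
  have hsub : ∫⁻ x in Ioi 0, ENNReal.ofReal ((s * x) ^ a) * f (s * x)
      = ENNReal.ofReal s⁻¹ * ∫⁻ x in Ioi 0, ENNReal.ofReal (x ^ a) * f x := by
    rw [← abs_of_pos (inv_pos.2 hs), ← smul_eq_mul, ← lintegral_smul_measure,
      ← Measure.restrict_smul, ← Real.map_volume_mul_left hs.ne',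
      setLIntegral_map measurableSet_Ioi (by fun_prop) (by fun_prop), hpre]
  rw [lintegral_map hf (by fun_prop), lintegral_powerMeasure a (by fun_prop),
    setLIntegral_congr_fun measurableSet_Ioi hscale, lintegral_const_mul _ (by fun_prop), hsub,
    lintegral_smul_measure, lintegral_powerMeasure a hf, smul_eq_mul, ← mul_assoc,
    ← ENNReal.ofReal_mul (by positivity), ← Real.rpow_neg_one s, ← Real.rpow_add hs]
  ring_nf

variable {p : ℝ}

theorem rpow_mul_pow_mul_exp_eq (k : ℕ) {y : ℝ} (hy : 0 < y) :
    y ^ a * ((y ^ 2) ^ k * Real.exp (-p * y ^ 2))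
      = y ^ (2 * (k : ℝ) + a) * Real.exp (-p * y ^ (2 : ℝ)) := by
  rw [Real.rpow_add hy, Real.rpow_mul hy.le, Real.rpow_natCast, Real.rpow_two]
  ring

theorem integrable_pow_mul_exp_neg_mul_sq (ha : -1 < a) (hp : 0 < p) (k : ℕ) :
    Integrable (fun y => (y ^ 2) ^ k * Real.exp (-p * y ^ 2)) (powerMeasure a) := by
  have hk : -1 < 2 * (k : ℝ) + a := by linarith [k.cast_nonneg (α := ℝ)]
  rw [integrable_powerMeasure_iff]
  refine (integrableOn_rpow_mul_exp_neg_mul_rpow hk two_pos hp).congr_fun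
    (fun y hy => ?_) measurableSet_Ioi
  exact (rpow_mul_pow_mul_exp_eq k hy).symm

theorem integral_pow_mul_exp_neg_mul_sq (ha : -1 < a) (hp : 0 < p) (k : ℕ) :
    ∫ y, (y ^ 2) ^ k * Real.exp (-p * y ^ 2) ∂powerMeasure a
      = p ^ (-(k + (a + 1) / 2)) * Real.Gamma (k + (a + 1) / 2) / 2 := by
  have hk : -1 < 2 * (k : ℝ) + a := by linarith [k.cast_nonneg (α := ℝ)]
  rw [← setIntegral_Ioi_eq_integral_powerMeasure]
  simp only [smul_eq_mul]
  rw [setIntegral_congr_fun measurableSet_Ioi fun y hy => rpow_mul_pow_mul_exp_eq k hy,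
    integral_rpow_mul_exp_neg_mul_rpow two_pos hk hp]
  ring_nf

theorem integrable_exp_neg_mul_sq_powerMeasure (ha : -1 < a) (hp : 0 < p) :
    Integrable (fun y => Real.exp (-p * y ^ 2)) (powerMeasure a) := by
  simpa using integrable_pow_mul_exp_neg_mul_sq ha hp 0

theorem integral_exp_neg_mul_sq_powerMeasure (ha : -1 < a) (hp : 0 < p) :
    ∫ y, Real.exp (-p * y ^ 2) ∂powerMeasure a
      = p ^ (-((a + 1) / 2)) * Real.Gamma ((a + 1) / 2) / 2 := by
  simpa using integral_pow_mul_exp_neg_mul_sq ha hp 0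

theorem besselCoeff_mul_integral_pow_mul_exp (ha : -1 < a) (hp : 0 < p) (k : ℕ) :
    besselCoeff a k * ∫ y, (y ^ 2) ^ k * Real.exp (-p * y ^ 2) ∂powerMeasure a
      = (2 * p) ^ (-((a + 1) / 2)) * ((-(4 * p)⁻¹) ^ k / k.factorial) := by
  have hΓ : Real.Gamma (k + (a + 1) / 2) ≠ 0 :=
    (Real.Gamma_pos_of_pos (by linarith [k.cast_nonneg (α := ℝ)])).ne'
  have hp' : p ^ (-(k + (a + 1) / 2)) = (p ^ k)⁻¹ * p ^ (-((a + 1) / 2)) := by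
    rw [neg_add, Real.rpow_add hp, Real.rpow_neg hp.le, Real.rpow_natCast]
  have htwo : (2 : ℝ) ^ (2 * (k : ℝ) + (a - 1) / 2) * 2 * 2 ^ (-((a + 1) / 2)) = 4 ^ k := by
    rw [← Real.rpow_add_one two_ne_zero, ← Real.rpow_add two_pos,
      show 2 * (k : ℝ) + (a - 1) / 2 + 1 + -((a + 1) / 2) = 2 * k by ring,
      Real.rpow_mul zero_le_two, Real.rpow_natCast]
    norm_num
  rw [integral_pow_mul_exp_neg_mul_sq ha hp, besselCoeff, Real.mul_rpow zero_le_two hp.le, hp',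
    neg_eq_neg_one_mul (4 * p)⁻¹, mul_pow, inv_pow, mul_pow, ← htwo]
  generalize (k : ℝ) + (a + 1) / 2 = s at hΓ ⊢
  field_simp

/-- Integrated term by term, the Bessel series becomes an exponential series. -/
theorem integral_normalizedBessel_mul_exp (ha : -1 < a) (hp : 0 < p) (x : ℝ) :
    ∫ y, normalizedBessel a (x * y) * Real.exp (-p * y ^ 2) ∂powerMeasure a
      = (2 * p) ^ (-((a + 1) / 2)) * Real.exp (-(4 * p)⁻¹ * x ^ 2) := by
  set F : ℕ → ℝ → ℝ := fun k y =>
    besselCoeff a k * (x ^ 2) ^ k * ((y ^ 2) ^ k * Real.exp (-p * y ^ 2)) with hF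
  have hF_int (k : ℕ) : Integrable (F k) (powerMeasure a) :=
    (integrable_pow_mul_exp_neg_mul_sq ha hp k).const_mul _
  have hF_integral (k : ℕ) : ∫ y, F k y ∂powerMeasure a
      = (2 * p) ^ (-((a + 1) / 2)) * ((-(4 * p)⁻¹ * x ^ 2) ^ k / k.factorial) := by
    rw [hF, integral_const_mul, mul_right_comm, besselCoeff_mul_integral_pow_mul_exp ha hp, mul_pow]
    ring
  have hF_norm (k : ℕ) : ∫ y, ‖F k y‖ ∂powerMeasure a = |∫ y, F k y ∂powerMeasure a| := by
    simp only [hF, norm_mul, integral_const_mul, abs_mul]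
    congr 1
    rw [abs_of_nonneg (integral_nonneg fun y => by positivity)]
    exact integral_congr_ae (.of_forall fun y => by simp)
  have hsum := Real.summable_pow_div_factorial (-(4 * p)⁻¹ * x ^ 2)
  have hF_sum : Summable fun k => ∫ y, ‖F k y‖ ∂powerMeasure a := by
    simp only [hF_norm, hF_integral]
    exact (hsum.mul_left _).abs
  have htsum (y : ℝ) : ∑' k, F k y = normalizedBessel a (x * y) * Real.exp (-p * y ^ 2) := by
    rw [normalizedBessel, ← tsum_mul_right]
    refine tsum_congr fun k => ?_
    simp only [hF]
    ring
  have hexp : (2 * p) ^ (-((a + 1) / 2)) * Real.exp (-(4 * p)⁻¹ * x ^ 2)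
      = ∑' k, ∫ y, F k y ∂powerMeasure a := by
    rw [tsum_congr hF_integral, tsum_mul_left, Real.exp_eq_exp_ℝ, NormedSpace.exp_eq_tsum_div]
  simp only [hexp, ← htsum]
  exact (hasSum_integral_of_summable_integral_norm hF_int hF_sum).tsum_eq.symm

end PowerMeasure

section Uniqueness

variable {E : Type*} [NormedAddCommGroup E] [NormedSpace ℝ E] {μ : Measure ℝ} {m : ℝ → E}

theorem integral_comp_exp_neg_sq_smul_eq_zero (hm : Integrable m μ)
    (h : ∀ n : ℕ, ∫ x, Real.exp (-(n * x ^ 2)) • m x ∂μ = 0) {F : ℝ → ℝ}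
    (hF : Continuous F) : ∫ x, F (Real.exp (-x ^ 2)) • m x ∂μ = 0 := by
  have hIcc (x : ℝ) : Real.exp (-x ^ 2) ∈ Icc (0 : ℝ) 1 :=
    ⟨(Real.exp_pos _).le, Real.exp_le_one_iff.2 (neg_nonpos.2 (sq_nonneg x))⟩
  have hint {f : ℝ → ℝ} (hf : Continuous f) :
      Integrable (fun x => f (Real.exp (-x ^ 2)) • m x) μ := by
    obtain ⟨C, hC⟩ := isCompact_Icc.exists_bound_of_continuousOn hf.continuousOn
    exact hm.bdd_smul C (by fun_prop) (.of_forall fun x => hC _ (hIcc x))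
  have hpoly (P : Polynomial ℝ) : ∫ x, P.eval (Real.exp (-x ^ 2)) • m x ∂μ = 0 := by
    induction P using Polynomial.induction_on' with
    | add P Q hP hQ =>
      simp only [Polynomial.eval_add, add_smul]
      rw [integral_add (hint P.continuous) (hint Q.continuous), hP, hQ, add_zero]
    | monomial n c =>
      simp only [Polynomial.eval_monomial, mul_smul, ← Real.exp_nat_mul, mul_neg]
      rw [integral_smul, h n, smul_zero]
  refine norm_le_zero_iff.1 (le_of_forall_pos_le_add fun ε hε => ?_)
  have : 0 ≤ ∫ x, ‖m x‖ ∂μ := integral_nonneg fun x => norm_nonneg _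
  obtain ⟨P, hP⟩ := exists_polynomial_near_of_continuousOn 0 1 F hF.continuousOn
    (ε / (∫ x, ‖m x‖ ∂μ + 1)) (by positivity)
  calc ‖∫ x, F (Real.exp (-x ^ 2)) • m x ∂μ‖
      = ‖∫ x, (P.eval (Real.exp (-x ^ 2)) - F (Real.exp (-x ^ 2))) • m x ∂μ‖ := by
        simp only [sub_smul]
        rw [integral_sub (hint P.continuous) (hint hF), hpoly, zero_sub, norm_neg]
    _ ≤ ∫ x, ε / (∫ x, ‖m x‖ ∂μ + 1) * ‖m x‖ ∂μ := by
        refine norm_integral_le_of_norm_le (hm.norm.const_mul _) (.of_forall fun x => ?_)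
        rw [norm_smul]
        exact mul_le_mul_of_nonneg_right (hP _ (hIcc x)).le (norm_nonneg _)
    _ = ε * ((∫ x, ‖m x‖ ∂μ) / (∫ x, ‖m x‖ ∂μ + 1)) := by
        rw [integral_const_mul]
        ring
    _ ≤ 0 + ε := by
        rw [zero_add]
        exact mul_le_of_le_one_right hε.le (div_le_one_of_le₀ (by linarith) (by positivity))

theorem exists_continuous_eq_comp_exp_neg_sq {g : ℝ → ℝ} (hg : Continuous g)
    (hsupp : HasCompactSupport g) :
    ∃ F : ℝ → ℝ, Continuous F ∧ ∀ x, 0 ≤ x → F (Real.exp (-x ^ 2)) = g x := by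
  obtain ⟨R, hR, hgR⟩ := hsupp.exists_pos_le_norm
  refine ⟨fun u => g √(-Real.log (max u (Real.exp (-R ^ 2)))), ?_, fun x hx => ?_⟩
  · refine hg.comp (Continuous.sqrt (Continuous.neg ?_))
    exact (continuous_id.max continuous_const).log
      fun u => ((Real.exp_pos _).trans_le (le_max_right _ _)).ne'
  · dsimp only
    rcases le_total x R with hxR | hRx
    · rw [max_eq_left (by gcongr), Real.log_exp, neg_neg, Real.sqrt_sq hx]
    · rw [max_eq_right (by gcongr), Real.log_exp, neg_neg, Real.sqrt_sq hR.le,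
        hgR R (le_abs_self R), hgR x (hRx.trans (le_abs_self x))]

theorem ae_eq_zero_of_integral_exp_neg_mul_sq_smul_eq_zero [CompleteSpace E]
    (hμ : ∀ᵐ x ∂μ, 0 ≤ x) (hm : Integrable m μ)
    (h : ∀ n : ℕ, ∫ x, Real.exp (-(n * x ^ 2)) • m x ∂μ = 0) : m =ᵐ[μ] 0 := by
  refine ae_eq_zero_of_integral_contDiff_smul_eq_zero hm.locallyIntegrable fun g hg hsupp => ?_
  obtain ⟨F, hF, hFg⟩ := exists_continuous_eq_comp_exp_neg_sq hg.continuous hsupp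
  rw [← integral_comp_exp_neg_sq_smul_eq_zero hm h hF]
  refine integral_congr_ae ?_
  filter_upwards [hμ] with x hx
  rw [hFg x hx]

end Uniqueness

/-- Equal Gram matrices make `∑ cᵢ uᵢ ↦ ⟪f, ∑ cᵢ vᵢ⟫` a well-defined functional bounded by `‖f‖`;
the vector `h` represents a Hahn–Banach extension of it. -/
theorem exists_norm_le_forall_inner_eq_of_gram_eq {𝕜 ι H K : Type*} [RCLike 𝕜]
    [NormedAddCommGroup H] [InnerProductSpace 𝕜 H] [CompleteSpace H]
    [NormedAddCommGroup K] [InnerProductSpace 𝕜 K] {u : ι → H} {v : ι → K}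
    (huv : ∀ i j, inner 𝕜 (u i) (u j) = inner 𝕜 (v i) (v j)) (f : K) :
    ∃ h : H, ‖h‖ ≤ ‖f‖ ∧ ∀ i, inner 𝕜 (u i) h = inner 𝕜 (v i) f := by
  set U := Finsupp.linearCombination 𝕜 u
  set V := Finsupp.linearCombination 𝕜 v
  have hnorm (c : ι →₀ 𝕜) : ‖V c‖ = ‖U c‖ := by
    simp only [norm_eq_sqrt_re_inner (𝕜 := 𝕜), U, V, Finsupp.linearCombination_apply,
      Finsupp.sum_inner, Finsupp.inner_sum, inner_smul_left, inner_smul_right, huv]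
  have hbound (c : ι →₀ 𝕜) : ‖((innerSL 𝕜 f).toLinearMap ∘ₗ V) c‖ ≤ ‖f‖ * ‖U c‖ :=
    (norm_inner_le_norm f (V c)).trans_eq (by rw [hnorm])
  obtain ⟨φ, hφ, hφnorm⟩ := exists_extension_norm_eq (LinearMap.range U)
    (((innerSL 𝕜 f).toLinearMap ∘ₗ V).compLeftInverse U)
  have hφU (c : ι →₀ 𝕜) : φ (U c) = inner 𝕜 f (V c) :=
    (hφ ⟨U c, c, rfl⟩).trans (LinearMap.compLeftInverse_apply_of_bdd _ _ ⟨_, hbound⟩ c _ rfl)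
  refine ⟨(InnerProductSpace.toDual 𝕜 H).symm φ, ?_, fun i => ?_⟩
  · rw [LinearIsometryEquiv.norm_map, hφnorm]
    refine ContinuousLinearMap.opNorm_le_bound _ (norm_nonneg f) ?_
    rintro ⟨_, c, rfl⟩
    rw [LinearMap.compLeftInverse_apply_of_bdd _ _ ⟨_, hbound⟩ c _ rfl]
    exact hbound c
  · have := hφU (Finsupp.single i 1)
    simp only [U, V, Finsupp.linearCombination_single, one_smul] at this
    rw [← inner_conj_symm, InnerProductSpace.toDual_symm_apply, this, inner_conj_symm]

/-- The Hankel transform of order `(a - 1) / 2`, normalized so that it is an isometry of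
`L²(x ^ a dx)` and reduces to the cosine transform for `a = 0`. -/
noncomputable def hankelTransform (a : ℝ) (f : ℝ → ℂ) (x : ℝ) : ℂ :=
  ∫ y, normalizedBessel a (x * y) • f y ∂powerMeasure a

/-- The Gaussian `exp (-p x²)`, complex-valued so that the Hankel transform applies to it. -/
noncomputable def gaussian (p x : ℝ) : ℂ := (Real.exp (-p * x ^ 2) : ℂ)

section Gaussian

variable {a p q : ℝ}

theorem continuous_gaussian (p : ℝ) : Continuous (gaussian p) := by
  unfold gaussian
  fun_prop

theorem gaussian_add (p q x : ℝ) : gaussian (p + q) x = gaussian p x * gaussian q x := by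
  rw [gaussian, gaussian, gaussian, ← Complex.ofReal_mul, ← Real.exp_add]
  ring_nf

theorem conj_gaussian (p x : ℝ) : starRingEnd ℂ (gaussian p x) = gaussian p x :=
  Complex.conj_ofReal _

theorem norm_gaussian_le_one (hp : 0 ≤ p) (x : ℝ) : ‖gaussian p x‖ ≤ 1 := by
  rw [gaussian, Complex.norm_real, Real.norm_of_nonneg (Real.exp_pos _).le, Real.exp_le_one_iff,
    neg_mul]
  exact neg_nonpos.2 (by positivity)

theorem integrable_gaussian (ha : -1 < a) (hp : 0 < p) :
    Integrable (gaussian p) (powerMeasure a) :=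
  (integrable_exp_neg_mul_sq_powerMeasure ha hp).ofReal

theorem memLp_two_gaussian (ha : -1 < a) (hp : 0 < p) :
    MemLp (gaussian p) 2 (powerMeasure a) := by
  refine (memLp_two_iff_integrable_sq_norm (continuous_gaussian p).aestronglyMeasurable).2 ?_
  refine (integrable_gaussian ha (add_pos hp hp)).norm.congr (.of_forall fun x => ?_)
  simp only [gaussian_add, norm_mul, sq]

theorem integral_gaussian_mul_gaussian (ha : -1 < a) (hp : 0 < p) (hq : 0 < q) :
    ∫ x, gaussian p x * gaussian q x ∂powerMeasure a
      = (((p + q) ^ (-((a + 1) / 2)) * Real.Gamma ((a + 1) / 2) / 2 : ℝ) : ℂ) := by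
  simp only [← gaussian_add]
  rw [← integral_exp_neg_mul_sq_powerMeasure ha (add_pos hp hq), ← integral_complex_ofReal]
  rfl

theorem hankelTransform_gaussian (ha : -1 < a) (hp : 0 < p) :
    hankelTransform a (gaussian p)
      = (2 * p) ^ (-((a + 1) / 2)) • gaussian (4 * p)⁻¹ := by
  ext x
  rw [Pi.smul_apply, gaussian, Complex.real_smul, ← Complex.ofReal_mul,
    ← integral_normalizedBessel_mul_exp ha hp x, ← integral_complex_ofReal]
  simp only [hankelTransform, gaussian, Complex.real_smul, Complex.ofReal_mul]

theorem integral_hankelTransform_gaussian_mul (ha : -1 < a) (hp : 0 < p) (hq : 0 < q) :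
    ∫ x, hankelTransform a (gaussian p) x * hankelTransform a (gaussian q) x ∂powerMeasure a
      = ∫ x, gaussian p x * gaussian q x ∂powerMeasure a := by
  simp only [hankelTransform_gaussian ha hp, hankelTransform_gaussian ha hq, Pi.smul_apply,
    smul_mul_smul_comm]
  rw [integral_smul, integral_gaussian_mul_gaussian ha hp hq,
    integral_gaussian_mul_gaussian ha (by positivity) (by positivity), Complex.real_smul,
    ← Complex.ofReal_mul, mul_div_assoc, mul_div_assoc, ← mul_assoc,
    ← Real.mul_rpow (by positivity) (by positivity),
    ← Real.mul_rpow (by positivity) (by positivity)]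
  congr 4
  field_simp
  ring

end Gaussian

section HankelTransform

variable {a : ℝ} {f g : ℝ → ℂ}

theorem integrable_normalizedBessel_smul (ha : 0 ≤ a) (hf : Integrable f (powerMeasure a))
    (x : ℝ) : Integrable (fun y => normalizedBessel a (x * y) • f y) (powerMeasure a) := by
  have hcont := continuous_normalizedBessel (show -1 < a by linarith)
  exact hf.bdd_smul (φ := fun y => normalizedBessel a (x * y)) (normalizedBessel a 0) (by fun_prop)
    (.of_forall fun y => abs_normalizedBessel_le ha (x * y))

theorem hankelTransform_add (ha : 0 ≤ a) (hf : Integrable f (powerMeasure a))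
    (hg : Integrable g (powerMeasure a)) :
    hankelTransform a (f + g) = hankelTransform a f + hankelTransform a g := by
  ext x
  simp only [hankelTransform, Pi.add_apply, smul_add]
  exact integral_add (integrable_normalizedBessel_smul ha hf x)
    (integrable_normalizedBessel_smul ha hg x)

theorem norm_normalizedBessel_smul_le (ha : 0 ≤ a) (f : ℝ → ℂ) (x y : ℝ) :
    ‖normalizedBessel a (x * y) • f y‖ ≤ normalizedBessel a 0 * ‖f y‖ := by
  rw [norm_smul]
  exact mul_le_mul_of_nonneg_right (abs_normalizedBessel_le ha (x * y)) (norm_nonneg _)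

theorem norm_hankelTransform_le (ha : 0 ≤ a) (hf : Integrable f (powerMeasure a)) (x : ℝ) :
    ‖hankelTransform a f x‖ ≤ normalizedBessel a 0 * ∫ y, ‖f y‖ ∂powerMeasure a := by
  rw [← integral_const_mul]
  exact norm_integral_le_of_norm_le (hf.norm.const_mul _)
    (.of_forall (norm_normalizedBessel_smul_le ha f x))

theorem continuous_hankelTransform (ha : 0 ≤ a) (hf : Integrable f (powerMeasure a)) :
    Continuous (hankelTransform a f) := by
  have hcont := continuous_normalizedBessel (show -1 < a by linarith)
  exact continuous_of_dominated
    (fun x => (integrable_normalizedBessel_smul ha hf x).aestronglyMeasurable)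
    (fun x => .of_forall (norm_normalizedBessel_smul_le ha f x)) (hf.norm.const_mul _)
    (.of_forall fun y => by fun_prop)

theorem integral_hankelTransform_mul (ha : 0 ≤ a) (hf : Integrable f (powerMeasure a))
    (hg : Integrable g (powerMeasure a)) :
    ∫ x, hankelTransform a f x * g x ∂powerMeasure a
      = ∫ x, f x * hankelTransform a g x ∂powerMeasure a := by
  have hcont := continuous_normalizedBessel (show -1 < a by linarith)
  have hkernel : AEStronglyMeasurable (fun z : ℝ × ℝ => normalizedBessel a (z.1 * z.2))
      ((powerMeasure a).prod (powerMeasure a)) := by fun_prop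
  have hint : Integrable (fun z : ℝ × ℝ => normalizedBessel a (z.1 * z.2) • (g z.1 * f z.2))
      ((powerMeasure a).prod (powerMeasure a)) :=
    Integrable.bdd_smul (hg.mul_prod hf) _ hkernel
      (.of_forall fun z => abs_normalizedBessel_le ha (z.1 * z.2))
  have hleft (x : ℝ) : hankelTransform a f x * g x
      = ∫ y, normalizedBessel a (x * y) • (g x * f y) ∂powerMeasure a := by
    rw [hankelTransform, ← integral_mul_const]
    simp only [smul_mul_assoc, mul_comm (g x)]
  have hright (y : ℝ) : f y * hankelTransform a g y
      = ∫ x, normalizedBessel a (x * y) • (g x * f y) ∂powerMeasure a := by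
    rw [hankelTransform, mul_comm, ← integral_mul_const]
    simp only [smul_mul_assoc, mul_comm y]
  simp only [hleft, hright]
  exact integral_integral_swap hint

theorem ae_eq_of_forall_integral_gaussian_mul_eq {μ : Measure ℝ} (hμ : ∀ᵐ x ∂μ, 0 ≤ x)
    (hf : Integrable (fun x => gaussian 1 x * f x) μ)
    (hg : Integrable (fun x => gaussian 1 x * g x) μ)
    (hfg : ∀ n : ℕ, ∫ x, gaussian (n + 1) x * f x ∂μ = ∫ x, gaussian (n + 1) x * g x ∂μ) :
    f =ᵐ[μ] g := by
  have hint (n : ℕ) {h : ℝ → ℂ} (hh : Integrable (fun x => gaussian 1 x * h x) μ) :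
      Integrable (fun x => gaussian (n + 1) x * h x) μ := by
    simp only [gaussian_add, mul_assoc]
    exact hh.bdd_mul (continuous_gaussian n).aestronglyMeasurable
      (.of_forall (norm_gaussian_le_one n.cast_nonneg))
  have hm : (fun x => gaussian 1 x * f x - gaussian 1 x * g x) =ᵐ[μ] 0 := by
    refine ae_eq_zero_of_integral_exp_neg_mul_sq_smul_eq_zero hμ (hf.sub hg) fun n => ?_
    have hsmul (x : ℝ) : Real.exp (-(n * x ^ 2)) • (gaussian 1 x * f x - gaussian 1 x * g x)
        = gaussian (n + 1) x * f x - gaussian (n + 1) x * g x := by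
      rw [gaussian_add, ← neg_mul, Complex.real_smul, ← gaussian]
      ring
    simp only [hsmul]
    rw [integral_sub (hint n hf) (hint n hg), hfg n, sub_self]
  filter_upwards [hm] with x hx
  exact mul_left_cancel₀ (Complex.ofReal_ne_zero.2 (Real.exp_ne_zero _)) (sub_eq_zero.1 hx)

theorem inner_toLp_toLp {α : Type*} [MeasurableSpace α] {μ : Measure α} {f g : α → ℂ}
    (hf : MemLp f 2 μ) (hg : MemLp g 2 μ) :
    inner ℂ (hf.toLp f) (hg.toLp g) = ∫ x, starRingEnd ℂ (f x) * g x ∂μ := by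
  rw [L2.inner_def]
  refine integral_congr_ae ?_
  filter_upwards [hf.coeFn_toLp, hg.coeFn_toLp] with x hfx hgx
  rw [hfx, hgx, RCLike.inner_apply']

theorem conj_hankelTransform_gaussian (ha : -1 < a) {p : ℝ} (hp : 0 < p) (x : ℝ) :
    starRingEnd ℂ (hankelTransform a (gaussian p) x) = hankelTransform a (gaussian p) x := by
  rw [hankelTransform_gaussian ha hp, Pi.smul_apply, Complex.real_smul, map_mul, conj_gaussian,
    Complex.conj_ofReal]

theorem memLp_two_hankelTransform_gaussian (ha : -1 < a) {p : ℝ} (hp : 0 < p) :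
    MemLp (hankelTransform a (gaussian p)) 2 (powerMeasure a) := by
  rw [hankelTransform_gaussian ha hp]
  exact (memLp_two_gaussian ha (by positivity)).const_smul _

theorem exists_memLp_two_integral_gaussian_mul_eq (ha : 0 ≤ a)
    (hf : Integrable f (powerMeasure a)) (hf₂ : MemLp f 2 (powerMeasure a)) :
    ∃ h : ℝ → ℂ, MemLp h 2 (powerMeasure a) ∧
      eLpNorm h 2 (powerMeasure a) ≤ eLpNorm f 2 (powerMeasure a) ∧
      ∀ n : ℕ, ∫ x, gaussian (n + 1) x * h x ∂powerMeasure a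
        = ∫ x, gaussian (n + 1) x * hankelTransform a f x ∂powerMeasure a := by
  have ha' : -1 < a := by linarith
  have hpos (n : ℕ) : (0 : ℝ) < n + 1 := by positivity
  have hgram (m n : ℕ) : inner ℂ ((memLp_two_gaussian ha' (hpos m)).toLp _)
        ((memLp_two_gaussian ha' (hpos n)).toLp _)
      = inner ℂ ((memLp_two_hankelTransform_gaussian ha' (hpos m)).toLp _)
        ((memLp_two_hankelTransform_gaussian ha' (hpos n)).toLp _) := by
    simp only [inner_toLp_toLp, conj_gaussian, conj_hankelTransform_gaussian ha' (hpos m)]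
    exact (integral_hankelTransform_gaussian_mul ha' (hpos m) (hpos n)).symm
  obtain ⟨h, hnorm, hinner⟩ := exists_norm_le_forall_inner_eq_of_gram_eq hgram (hf₂.toLp f)
  refine ⟨h, Lp.memLp h, ?_, fun n => ?_⟩
  · rw [← Lp.enorm_def, ← Lp.enorm_toLp hf₂]
    exact enorm_le_iff_norm_le.2 hnorm
  · have := hinner n
    rw [← Lp.toLp_coeFn h (Lp.memLp h)] at this
    simp only [inner_toLp_toLp, conj_gaussian, conj_hankelTransform_gaussian ha' (hpos n)] at this
    rw [← integral_hankelTransform_mul ha (integrable_gaussian ha' (hpos n)) hf, ← this]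

theorem eLpNorm_two_hankelTransform_le (ha : 0 ≤ a) (hf : Integrable f (powerMeasure a))
    (hf₂ : MemLp f 2 (powerMeasure a)) :
    eLpNorm (hankelTransform a f) 2 (powerMeasure a) ≤ eLpNorm f 2 (powerMeasure a) := by
  have ha' : -1 < a := by linarith
  -- A priori the transform of `f` is only bounded; it is in `L²` because it agrees with `h`.
  obtain ⟨h, hh, hnorm, hgauss⟩ := exists_memLp_two_integral_gaussian_mul_eq ha hf hf₂
  have hgh : Integrable (fun x => gaussian 1 x * h x) (powerMeasure a) :=
    (memLp_two_gaussian ha' one_pos).integrable_mul hh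
  have hgT : Integrable (fun x => gaussian 1 x * hankelTransform a f x) (powerMeasure a) :=
    (integrable_gaussian ha' one_pos).mul_bdd
      (continuous_hankelTransform ha hf).aestronglyMeasurable
      (.of_forall (norm_hankelTransform_le ha hf))
  have hae := ae_eq_of_forall_integral_gaussian_mul_eq
    ((ae_powerMeasure_pos a).mono fun _ => le_of_lt) hgh hgT hgauss
  rwa [eLpNorm_congr_ae hae] at hnorm

end HankelTransform

/-- The hypotheses of the interpolation theorem: on integrable functions, `T` is a.e. additive,
bounded from `L¹` to `L^∞` with constant `M`, and bounded on `L²` with constant `N`; neither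
constant need be optimal. -/
structure IsBoundedOneTopTwoTwo {α β E F : Type*} [MeasurableSpace α] [MeasurableSpace β]
    [NormedAddCommGroup E] [NormedAddCommGroup F] (T : (α → E) → β → F) (μ : Measure α)
    (ν : Measure β) (M N : NNReal) : Prop where
  aestronglyMeasurable {f : α → E} : Integrable f μ → AEStronglyMeasurable (T f) ν
  map_add {f g : α → E} : Integrable f μ → Integrable g μ → T (f + g) =ᵐ[ν] T f + T g
  eLpNorm_top_le {f : α → E} : Integrable f μ → eLpNorm (T f) ⊤ ν ≤ M * eLpNorm f 1 μ
  eLpNorm_two_le {f : α → E} : Integrable f μ → eLpNorm (T f) 2 ν ≤ N * eLpNorm f 2 μ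

section Interpolation

variable {α β E F : Type*} [MeasurableSpace α] [MeasurableSpace β] {μ : Measure α} {ν : Measure β}
  [NormedAddCommGroup E] [NormedAddCommGroup F] {f : α → E} {v v₁ v₂ : β → F} {q r l L : ℝ}

theorem lintegral_Ioc_ofReal_rpow (hr : -1 < r) (hL : 0 ≤ L) :
    ∫⁻ l in Ioc 0 L, ENNReal.ofReal (l ^ r) = ENNReal.ofReal (L ^ (r + 1) / (r + 1)) := by
  have hint : IntegrableOn (fun l : ℝ => l ^ r) (Ioc 0 L) :=
    (intervalIntegrable_iff_integrableOn_Ioc_of_le hL).1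
      (intervalIntegral.intervalIntegrable_rpow' hr)
  have hnonneg : 0 ≤ᵐ[volume.restrict (Ioc 0 L)] fun l : ℝ => l ^ r := by
    filter_upwards [ae_restrict_mem measurableSet_Ioc] with l hl
    exact Real.rpow_nonneg hl.1.le r
  rw [← ofReal_integral_eq_lintegral_ofReal hint hnonneg, ← intervalIntegral.integral_of_le hL,
    integral_rpow (Or.inl hr), Real.zero_rpow (by linarith), sub_zero]

theorem sq_mul_lintegral_rpow_truncated (hrq : r.HolderConjugate q) (hr : 2 < r) (hL : 0 < L)
    {w : ℝ} (hw : 0 ≤ w) :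
    ENNReal.ofReal w ^ 2 * ∫⁻ l in Ioi 0 ∩ {l | l * w ^ (q - 1) ≤ L}, ENNReal.ofReal (l ^ (r - 3))
      = ENNReal.ofReal (L ^ (r - 2) / (r - 2)) * ENNReal.ofReal (w ^ q) := by
  rcases hw.eq_or_lt with rfl | hw
  · simp [Real.zero_rpow hrq.symm.ne_zero]
  have hset : Ioi 0 ∩ {l : ℝ | l * w ^ (q - 1) ≤ L} = Ioc 0 (L / w ^ (q - 1)) := by
    ext l
    simp only [mem_inter_iff, mem_Ioi, mem_ofPred_eq, mem_Ioc,
      le_div_iff₀ (Real.rpow_pos_of_pos hw _)]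
  have hexp : (w ^ (q - 1)) ^ (r - 2) = w ^ (2 : ℝ) / w ^ q := by
    rw [← Real.rpow_mul hw.le, ← Real.rpow_sub hw]
    congr 1
    linear_combination hrq.symm.sub_one_mul_conj
  rw [hset, lintegral_Ioc_ofReal_rpow (by linarith) (by positivity), ← ENNReal.ofReal_pow hw.le,
    ← ENNReal.ofReal_mul (by positivity),
    ← ENNReal.ofReal_mul (div_nonneg (by positivity) (by linarith)),
    show r - 3 + 1 = r - 2 by ring, Real.div_rpow hL.le (by positivity), hexp, Real.rpow_two]
  congr 1
  field_simp

theorem lintegral_lintegral_truncated_eq [SFinite μ] (hrq : r.HolderConjugate q) (hr : 2 < r)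
    (hL : 0 < L) (hf : AEStronglyMeasurable f μ) :
    ∫⁻ l in Ioi 0, ENNReal.ofReal (l ^ (r - 3)) *
        ∫⁻ y in {y | l * ‖f y‖ ^ (q - 1) ≤ L}, ‖f y‖ₑ ^ 2 ∂μ
      = ENNReal.ofReal (L ^ (r - 2) / (r - 2)) * ∫⁻ y, ENNReal.ofReal (‖f y‖ ^ q) ∂μ := by
  set G : ℝ → α → ENNReal := fun l y =>
    {p : ℝ × α | p.1 * ‖f p.2‖ ^ (q - 1) ≤ L}.indicator
      (fun p => ENNReal.ofReal (p.1 ^ (r - 3)) * ‖f p.2‖ₑ ^ 2) (l, y)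
  have hGmeas : AEMeasurable (Function.uncurry G) ((volume.restrict (Ioi 0)).prod μ) := by
    have hf' : AEStronglyMeasurable (fun p : ℝ × α => f p.2) ((volume.restrict (Ioi 0)).prod μ) :=
      hf.comp_snd
    have hnorm := hf'.norm.aemeasurable
    have henorm := hf'.enorm
    exact AEMeasurable.indicator₀ (by fun_prop) (nullMeasurableSet_le (by fun_prop) (by fun_prop))
  have hinner (l : ℝ) : ENNReal.ofReal (l ^ (r - 3)) *
      ∫⁻ y in {y | l * ‖f y‖ ^ (q - 1) ≤ L}, ‖f y‖ₑ ^ 2 ∂μ = ∫⁻ y, G l y ∂μ := by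
    have hnorm := hf.norm.aemeasurable
    have hset : NullMeasurableSet {y | l * ‖f y‖ ^ (q - 1) ≤ L} μ :=
      nullMeasurableSet_le (by fun_prop) (by fun_prop)
    rw [← lintegral_const_mul'' _ (hf.enorm.pow_const 2).restrict, ← lintegral_indicator₀ hset]
    rfl
  have houter (y : α) : ∫⁻ l in Ioi 0, G l y
      = ENNReal.ofReal (L ^ (r - 2) / (r - 2)) * ENNReal.ofReal (‖f y‖ ^ q) := by
    have hset : MeasurableSet {l : ℝ | l * ‖f y‖ ^ (q - 1) ≤ L} :=
      measurableSet_le (by fun_prop) measurable_const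
    rw [← sq_mul_lintegral_rpow_truncated hrq hr hL (norm_nonneg _), ofReal_norm, mul_comm,
      ← lintegral_mul_const _ (by fun_prop), inter_comm, ← Measure.restrict_restrict hset,
      ← lintegral_indicator hset]
    rfl
  simp only [hinner]
  rw [lintegral_lintegral_swap hGmeas, ← lintegral_const_mul'' _
    (hf.norm.aemeasurable.pow_const q).ennreal_ofReal]
  simp only [houter]

theorem lintegral_norm_rpow_le_of_forall_meas_le [SFinite μ] (hrq : r.HolderConjugate q)
    (hr : 2 < r) (hL : 0 < L) (hf : AEStronglyMeasurable f μ) (hv : AEStronglyMeasurable v ν)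
    {N : ENNReal} (hN : N ≠ ⊤)
    (hfv : ∀ l > 0, ENNReal.ofReal (l / 2) ^ 2 * ν {x | l < ‖v x‖}
      ≤ N * ∫⁻ y in {y | l * ‖f y‖ ^ (q - 1) ≤ L}, ‖f y‖ₑ ^ 2 ∂μ) :
    ∫⁻ x, ENNReal.ofReal (‖v x‖ ^ r) ∂ν
      ≤ ENNReal.ofReal r * (4 * N *
        (ENNReal.ofReal (L ^ (r - 2) / (r - 2)) * ∫⁻ y, ENNReal.ofReal (‖f y‖ ^ q) ∂μ)) := by
  rw [lintegral_rpow_eq_lintegral_meas_lt_mul ν (.of_forall fun x => norm_nonneg (v x))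
    hv.norm.aemeasurable (by linarith), ← lintegral_lintegral_truncated_eq hrq hr hL hf]
  gcongr ENNReal.ofReal r * ?_
  rw [← lintegral_const_mul' _ _ (by finiteness)]
  refine setLIntegral_mono' measurableSet_Ioi fun l (hl : 0 < l) => ?_
  have hpow : ENNReal.ofReal (l ^ (r - 1))
      = 4 * ENNReal.ofReal (l ^ (r - 3)) * ENNReal.ofReal (l / 2) ^ 2 := by
    rw [show r - 1 = r - 3 + 2 by ring, Real.rpow_add hl, Real.rpow_two, ← ENNReal.ofReal_ofNat 4,
      ← ENNReal.ofReal_pow (by positivity), ← ENNReal.ofReal_mul (by positivity),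
      ← ENNReal.ofReal_mul (by positivity)]
    congr 1
    ring
  calc ν {x | l < ‖v x‖} * ENNReal.ofReal (l ^ (r - 1))
      = 4 * ENNReal.ofReal (l ^ (r - 3)) *
          (ENNReal.ofReal (l / 2) ^ 2 * ν {x | l < ‖v x‖}) := by rw [hpow]; ring
    _ ≤ 4 * ENNReal.ofReal (l ^ (r - 3)) *
          (N * ∫⁻ y in {y | l * ‖f y‖ ^ (q - 1) ≤ L}, ‖f y‖ₑ ^ 2 ∂μ) :=
        mul_le_mul_right (hfv l hl) _
    _ = _ := by ring

theorem mul_eLpNorm_one_indicator_lt_le (hf : AEStronglyMeasurable f μ) (hq : 1 < q)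
    (hl : 0 ≤ l) :
    ENNReal.ofReal L * eLpNorm ({y | L < l * ‖f y‖ ^ (q - 1)}.indicator f) 1 μ
      ≤ ENNReal.ofReal l * ∫⁻ y, ENNReal.ofReal (‖f y‖ ^ q) ∂μ := by
  rw [eLpNorm_one_eq_lintegral_enorm, ← lintegral_const_mul'' _
    (hf.norm.aemeasurable.pow_const q).ennreal_ofReal]
  refine (lintegral_const_mul_le _ _).trans (lintegral_mono fun y => ?_)
  rw [enorm_indicator_eq_indicator_enorm]
  by_cases hy : L < l * ‖f y‖ ^ (q - 1)
  · have hpow : ‖f y‖ ^ q = ‖f y‖ ^ (q - 1) * ‖f y‖ := by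
      rw [← Real.rpow_add_one' (norm_nonneg _) (by linarith), sub_add_cancel]
    rw [indicator_of_mem (by exact hy), ← ofReal_norm, ← ENNReal.ofReal_mul' (norm_nonneg _),
      ← ENNReal.ofReal_mul hl, hpow, ← mul_assoc]
    exact ENNReal.ofReal_le_ofReal (mul_le_mul_of_nonneg_right hy.le (norm_nonneg _))
  · rw [indicator_of_notMem (by exact hy), mul_zero]
    exact zero_le

theorem sq_mul_meas_lt_norm_le (hl : 0 ≤ l) (hv : v =ᵐ[ν] v₁ + v₂)
    (h₁ : eLpNorm v₁ ⊤ ν ≤ ENNReal.ofReal (l / 2)) (h₂ : AEStronglyMeasurable v₂ ν) :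
    ENNReal.ofReal (l / 2) ^ 2 * ν {x | l < ‖v x‖} ≤ eLpNorm v₂ 2 ν ^ 2 := by
  have hmono : ν {x | l < ‖v x‖} ≤ ν {x | ENNReal.ofReal (l / 2) ≤ ‖v₂ x‖ₑ} := by
    refine measure_mono_ae ?_
    filter_upwards [hv, ae_le_eLpNormEssSup (f := v₁) (μ := ν)] with x hx hx₁ (hlx : l < ‖v x‖)
    have hv₁ : ‖v₁ x‖ ≤ l / 2 := by
      rw [← eLpNorm_exponent_top] at hx₁
      have := hx₁.trans h₁
      rwa [← ofReal_norm, ENNReal.ofReal_le_ofReal_iff (by positivity)] at this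
    have htri : ‖v x‖ ≤ ‖v₁ x‖ + ‖v₂ x‖ := by
      rw [hx]
      exact norm_add_le _ _
    change ENNReal.ofReal (l / 2) ≤ ‖v₂ x‖ₑ
    rw [← ofReal_norm]
    exact ENNReal.ofReal_le_ofReal (by linarith)
  refine (mul_le_mul_right hmono _).trans ?_
  simpa using mul_meas_ge_le_pow_eLpNorm' ν two_ne_zero ENNReal.ofNat_ne_top h₂
    (ENNReal.ofReal (l / 2))

theorem eLpNorm_two_indicator_sq {s : Set α} (hs : NullMeasurableSet s μ) :
    eLpNorm (s.indicator f) 2 μ ^ 2 = ∫⁻ y in s, ‖f y‖ₑ ^ 2 ∂μ := by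
  have hnorm : ∀ y, ‖s.indicator f y‖ₑ ^ 2 = s.indicator (fun y => ‖f y‖ₑ ^ 2) y := fun y => by
    by_cases hy : y ∈ s <;> simp [hy]
  have hpow := eLpNorm_nnreal_pow_eq_lintegral (f := s.indicator f) (μ := μ) (p := 2) two_ne_zero
  simp only [NNReal.coe_ofNat, ENNReal.rpow_ofNat, ENNReal.coe_ofNat, hnorm] at hpow
  rw [hpow, lintegral_indicator₀ hs]

theorem eLpNorm_ofReal_rpow_eq_lintegral (hr : 0 < r) :
    eLpNorm v (ENNReal.ofReal r) ν ^ r = ∫⁻ x, ENNReal.ofReal (‖v x‖ ^ r) ∂ν := by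
  have := eLpNorm_nnreal_pow_eq_lintegral (f := v) (μ := ν) (p := r.toNNReal)
    (Real.toNNReal_pos.2 hr).ne'
  rw [Real.coe_toNNReal r hr.le] at this
  rw [ENNReal.ofReal, this]
  simp only [← ENNReal.ofReal_rpow_of_nonneg (norm_nonneg _) hr.le, ofReal_norm]

variable {T : (α → E) → β → F} {M N : NNReal}

/-- The lower bound on `L` makes the part of `f` above the truncation height contribute at most
`l / 2` to `‖T f‖`, so the level `l` is only exceeded where the low part contributes `l / 2`. -/
theorem IsBoundedOneTopTwoTwo.sq_mul_meas_le (hT : IsBoundedOneTopTwoTwo T μ ν M N)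
    (hl : 0 < l) (hq : 1 < q)
    (hf : Integrable f μ) {A : ℝ} (hA : 0 < A) (hfA : ∫⁻ y, ENNReal.ofReal (‖f y‖ ^ q) ∂μ
      = ENNReal.ofReal A) (hL : 2 * M * A ≤ L) :
    ENNReal.ofReal (l / 2) ^ 2 * ν {x | l < ‖T f x‖}
      ≤ N ^ 2 * ∫⁻ y in {y | l * ‖f y‖ ^ (q - 1) ≤ L}, ‖f y‖ₑ ^ 2 ∂μ := by
  set low := {y | l * ‖f y‖ ^ (q - 1) ≤ L} with hlow
  have hnorm := hf.aestronglyMeasurable.norm.aemeasurable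
  have hlow_meas : NullMeasurableSet low μ := nullMeasurableSet_le (by fun_prop) (by fun_prop)
  have hcompl : lowᶜ = {y | L < l * ‖f y‖ ^ (q - 1)} := by
    ext y
    simp [hlow]
  have hf_low : Integrable (low.indicator f) μ := hf.indicator₀ hlow_meas
  have hf_high : Integrable (lowᶜ.indicator f) μ := hf.indicator₀ hlow_meas.compl
  have hsplit : T f =ᵐ[ν] T (lowᶜ.indicator f) + T (low.indicator f) := by
    simpa only [indicator_compl_add_self] using hT.map_add hf_high hf_low
  have hhigh : M * eLpNorm (lowᶜ.indicator f) 1 μ ≤ ENNReal.ofReal (l / 2) := by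
    have htail := mul_eLpNorm_one_indicator_lt_le (L := L) hf.aestronglyMeasurable hq hl.le
    rw [← hcompl, hfA] at htail
    have hM : ENNReal.ofReal (2 * M * A) = 2 * M * ENNReal.ofReal A := by
      rw [ENNReal.ofReal_mul (by positivity), ENNReal.ofReal_mul zero_le_two]
      simp
    rw [ENNReal.ofReal_div_of_pos two_pos, ENNReal.ofReal_ofNat,
      ENNReal.le_div_iff_mul_le (by simp) (by simp),
      ← ENNReal.mul_le_mul_iff_left (ENNReal.ofReal_pos.2 hA).ne' ENNReal.ofReal_ne_top]
    calc M * eLpNorm (lowᶜ.indicator f) 1 μ * 2 * ENNReal.ofReal A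
        = ENNReal.ofReal (2 * M * A) * eLpNorm (lowᶜ.indicator f) 1 μ := by rw [hM]; ring
      _ ≤ ENNReal.ofReal L * eLpNorm (lowᶜ.indicator f) 1 μ := by gcongr
      _ ≤ ENNReal.ofReal l * ENNReal.ofReal A := htail
  calc _ ≤ eLpNorm (T (low.indicator f)) 2 ν ^ 2 :=
        sq_mul_meas_lt_norm_le hl.le hsplit ((hT.eLpNorm_top_le hf_high).trans hhigh)
          (hT.aestronglyMeasurable hf_low)
    _ ≤ (N * eLpNorm (low.indicator f) 2 μ) ^ 2 := by gcongr; exact hT.eLpNorm_two_le hf_low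
    _ = N ^ 2 * ∫⁻ y in low, ‖f y‖ₑ ^ 2 ∂μ := by rw [mul_pow, eLpNorm_two_indicator_sq hlow_meas]

theorem IsBoundedOneTopTwoTwo.eLpNorm_rpow_le [SFinite μ] (hT : IsBoundedOneTopTwoTwo T μ ν M N)
    (hrq : r.HolderConjugate q) (hr : 2 < r) (hf : Integrable f μ) {B : ℝ} (hB : 0 < B)
    (hfB : eLpNorm f (ENNReal.ofReal q) μ = ENNReal.ofReal B) :
    eLpNorm (T f) (ENNReal.ofReal r) ν ^ r ≤ ENNReal.ofReal
      (r * (4 * N ^ 2 * ((2 * (M + 1)) ^ (r - 2) / (r - 2))) * B ^ r) := by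
  have hfB' : ∫⁻ y, ENNReal.ofReal (‖f y‖ ^ q) ∂μ = ENNReal.ofReal (B ^ q) := by
    rw [← eLpNorm_ofReal_rpow_eq_lintegral hrq.symm.pos, ← ENNReal.ofReal_rpow_of_pos hB, hfB]
  have : 0 < r - 2 := by linarith
  have hL : 0 < 2 * ((M : ℝ) + 1) * B ^ q := by positivity
  have hweak (l : ℝ) (hl : 0 < l) := hT.sq_mul_meas_le hl hrq.symm.lt hf
    (Real.rpow_pos_of_pos hB q) hfB' (L := 2 * (M + 1) * B ^ q) (by gcongr; linarith)
  have hexp : (B ^ q) ^ (r - 2) * B ^ q = B ^ r := by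
    rw [← Real.rpow_mul hB.le, ← Real.rpow_add hB]
    congr 1
    linear_combination hrq.sub_one_mul_conj
  have hN : (N : ENNReal) ^ 2 = ENNReal.ofReal (N ^ 2) := by
    rw [ENNReal.ofReal_pow N.coe_nonneg, ENNReal.ofReal_coe_nnreal]
  rw [eLpNorm_ofReal_rpow_eq_lintegral hrq.pos]
  refine (lintegral_norm_rpow_le_of_forall_meas_le hrq hr hL hf.aestronglyMeasurable
    (hT.aestronglyMeasurable hf) (by finiteness) hweak).trans_eq ?_
  rw [hfB', hN, ← ENNReal.ofReal_ofNat 4, ← ENNReal.ofReal_mul (by positivity),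
    ← ENNReal.ofReal_mul (by positivity), ← ENNReal.ofReal_mul (by positivity),
    ← ENNReal.ofReal_mul hrq.nonneg, Real.mul_rpow (by positivity) (by positivity), ← hexp]
  ring_nf

theorem IsBoundedOneTopTwoTwo.exists_eLpNorm_le [SFinite μ]
    (hT : IsBoundedOneTopTwoTwo T μ ν M N) (hrq : r.HolderConjugate q) (hr : 2 < r) :
    ∃ C : NNReal, ∀ f, Integrable f μ → MemLp f (ENNReal.ofReal q) μ →
      eLpNorm (T f) (ENNReal.ofReal r) ν ≤ C * eLpNorm f (ENNReal.ofReal q) μ := by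
  set K : ℝ := r * (4 * N ^ 2 * ((2 * (M + 1)) ^ (r - 2) / (r - 2))) with hK
  have hK0 : 0 ≤ K := by
    have : 0 < r - 2 := by linarith
    positivity
  refine ⟨(K ^ r⁻¹).toNNReal, fun f hf hfq => ?_⟩
  rcases eq_or_ne (eLpNorm f (ENNReal.ofReal q) μ) 0 with hf0 | hf0
  · rw [eLpNorm_eq_zero_iff hf.aestronglyMeasurable
      (ENNReal.ofReal_pos.2 hrq.symm.pos).ne'] at hf0
    have hTf := hT.eLpNorm_top_le hf
    rw [eLpNorm_congr_ae hf0, eLpNorm_zero, mul_zero, nonpos_iff_eq_zero,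
      eLpNorm_eq_zero_iff (hT.aestronglyMeasurable hf) ENNReal.top_ne_zero] at hTf
    rw [eLpNorm_congr_ae hTf, eLpNorm_zero]
    exact zero_le
  · have hB := ENNReal.toReal_pos hf0 hfq.2.ne
    rw [← ENNReal.rpow_le_rpow_iff hrq.pos]
    refine (hT.eLpNorm_rpow_le hrq hr hf hB (ENNReal.ofReal_toReal hfq.2.ne).symm).trans_eq ?_
    rw [ENNReal.mul_rpow_of_nonneg _ _ hrq.nonneg, ← hK, ENNReal.ofReal_mul hK0,
      ← ENNReal.ofReal_rpow_of_pos hB, ENNReal.ofReal_toReal hfq.2.ne]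
    congr 1
    change _ = ENNReal.ofReal (K ^ r⁻¹) ^ r
    rw [ENNReal.ofReal_rpow_of_nonneg (by positivity) hrq.nonneg,
      Real.rpow_inv_rpow hK0 hrq.ne_zero]

end Interpolation

section HankelInterpolation

variable {a r q : ℝ}

theorem isBoundedOneTopTwoTwo_hankelTransform (ha : 0 ≤ a) :
    IsBoundedOneTopTwoTwo (hankelTransform a) (powerMeasure a) (powerMeasure a)
      (normalizedBessel a 0).toNNReal 1 where
  aestronglyMeasurable hf := (continuous_hankelTransform ha hf).aestronglyMeasurable
  map_add hf hg := by rw [hankelTransform_add ha hf hg]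
  eLpNorm_top_le {f} hf := by
    rw [eLpNorm_exponent_top, eLpNorm_one_eq_lintegral_enorm,
      ← ofReal_integral_norm_eq_lintegral_enorm hf, ← ENNReal.ofReal,
      ← ENNReal.ofReal_mul' (integral_nonneg fun y => norm_nonneg (f y))]
    refine eLpNormEssSup_le_of_ae_enorm_bound (.of_forall fun x => ?_)
    rw [← ofReal_norm]
    exact ENNReal.ofReal_le_ofReal (norm_hankelTransform_le ha hf x)
  eLpNorm_two_le {f} hf := by
    rw [ENNReal.coe_one, one_mul]
    rcases eq_or_ne (eLpNorm f 2 (powerMeasure a)) ⊤ with hf₂ | hf₂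
    · exact hf₂ ▸ le_top
    · exact eLpNorm_two_hankelTransform_le ha hf ⟨hf.aestronglyMeasurable, hf₂.lt_top⟩

theorem exists_eLpNorm_hankelTransform_le (ha : 0 ≤ a) (hrq : r.HolderConjugate q) (hr : 2 ≤ r) :
    ∃ C : NNReal, ∀ f, Integrable f (powerMeasure a) →
      MemLp f (ENNReal.ofReal q) (powerMeasure a) →
      eLpNorm (hankelTransform a f) (ENNReal.ofReal r) (powerMeasure a)
        ≤ C * eLpNorm f (ENNReal.ofReal q) (powerMeasure a) := by
  rcases hr.eq_or_lt with rfl | hr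
  · have hq : q = 2 := by linarith [hrq.symm.sub_one_mul_conj]
    subst hq
    refine ⟨1, fun f hf _ => ?_⟩
    rw [ENNReal.ofReal_ofNat]
    exact (isBoundedOneTopTwoTwo_hankelTransform ha).eLpNorm_two_le hf
  · exact (isBoundedOneTopTwoTwo_hankelTransform ha).exists_eLpNorm_le hrq hr

end HankelInterpolation

theorem eLpNorm_comp_mul_left_powerMeasure {E : Type*} [NormedAddCommGroup E] (a : ℝ) {r s : ℝ}
    (hs : 0 < s) (hr : 0 < r) {g : ℝ → E} (hg : AEStronglyMeasurable g (powerMeasure a)) :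
    eLpNorm (fun x => g (s * x)) (ENNReal.ofReal r) (powerMeasure a) =
      ENNReal.ofReal (s ^ (-(a + 1) / r)) * eLpNorm g (ENNReal.ofReal r) (powerMeasure a) := by
  have hg' : AEStronglyMeasurable g ((powerMeasure a).map (s * ·)) := by
    rw [map_mul_left_powerMeasure a hs]
    exact hg.smul_measure _
  calc eLpNorm (g ∘ (s * ·)) (ENNReal.ofReal r) (powerMeasure a)
      = eLpNorm g (ENNReal.ofReal r) ((powerMeasure a).map (s * ·)) :=
        (eLpNorm_map_measure hg' (by fun_prop)).symm
    _ = ENNReal.ofReal (s ^ (-(a + 1))) ^ (1 / r) *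
          eLpNorm g (ENNReal.ofReal r) (powerMeasure a) := by
        rw [map_mul_left_powerMeasure a hs, eLpNorm_smul_measure_of_ne_top ENNReal.ofReal_ne_top,
          smul_eq_mul, one_div, ENNReal.toReal_inv, ENNReal.toReal_ofReal hr.le, ← one_div]
    _ = _ := by
        rw [ENNReal.ofReal_rpow_of_pos (by positivity), ← Real.rpow_mul hs.le, mul_one_div]

/-- The quadratic phase `exp (i s y²)`, by which the Schrödinger kernel differs from a dilated
Hankel kernel. -/
noncomputable def chirp (s y : ℝ) : ℂ := Complex.exp ((s * y ^ 2 : ℝ) * Complex.I)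

section Schrodinger

variable {a r q t : ℝ} {φ f : ℝ → ℂ}

theorem continuous_chirp (s : ℝ) : Continuous (chirp s) := by
  unfold chirp
  fun_prop

theorem norm_chirp (s y : ℝ) : ‖chirp s y‖ = 1 :=
  Complex.norm_exp_ofReal_mul_I _

theorem chirp_mul_chirp (s x y : ℝ) :
    chirp s x * chirp s y = Complex.exp ((s * (x ^ 2 + y ^ 2) : ℝ) * Complex.I) := by
  rw [chirp, chirp, ← Complex.exp_add]
  push_cast
  ring_nf

theorem integrable_chirp_mul {μ : Measure ℝ} (s : ℝ) (hφ : Integrable φ μ) :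
    Integrable (chirp s * φ) μ :=
  hφ.bdd_mul (continuous_chirp s).aestronglyMeasurable (.of_forall fun y => (norm_chirp s y).le)

theorem eLpNorm_chirp_mul {μ : Measure ℝ} (s : ℝ) (p : ENNReal) :
    eLpNorm (chirp s * φ) p μ = eLpNorm φ p μ :=
  eLpNorm_congr_norm_ae <| .of_forall fun y => by
    rw [Pi.mul_apply, norm_mul, norm_chirp, one_mul]

theorem exists_Skernel_eq (a : ℝ) (ht : t ≠ 0) :
    ∃ c : ℂ, ‖c‖ = 1 ∧ ∀ x y : ℝ, 0 < x → 0 < y →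
      Skernel a x y t = c * ((2 * |t|) ^ (-(a + 1) / 2) : ℝ) *
        normalizedBessel a (x * y / (2 * |t|)) * (chirp (4 * t)⁻¹ x * chirp (4 * t)⁻¹ y) := by
  rcases ht.lt_or_gt with h | h
  · refine ⟨Complex.exp (((a + 1) * Real.pi / 4 : ℝ) * Complex.I),
      Complex.norm_exp_ofReal_mul_I _, fun x y hx hy => ?_⟩
    rw [Skernel, if_neg h.not_gt, ← rpow_mul_besselJ_eq_normalizedBessel a (by positivity),
      chirp_mul_chirp, abs_of_neg h, ← mul_assoc, mul_comm Complex.I]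
    congr 2
    push_cast
    field_simp
  · refine ⟨Complex.exp ((-((a + 1) * Real.pi / 4) : ℝ) * Complex.I),
      Complex.norm_exp_ofReal_mul_I _, fun x y hx hy => ?_⟩
    rw [Skernel, if_pos h, ← rpow_mul_besselJ_eq_normalizedBessel a (by positivity),
      chirp_mul_chirp, abs_of_pos h, ← mul_assoc]
    congr 1
    · congr 4
      push_cast
      ring
    · congr 1
      push_cast
      field_simp

theorem exists_Sop_eq (a : ℝ) (ht : t ≠ 0) :
    ∃ c : ℂ, ‖c‖ = 1 ∧ ∀ φ x, 0 < x →
      Sop a t φ x = c * ((2 * |t|) ^ (-(a + 1) / 2) : ℝ) * chirp (4 * t)⁻¹ x *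
        hankelTransform a (chirp (4 * t)⁻¹ * φ) ((2 * |t|)⁻¹ * x) := by
  obtain ⟨c, hc, hS⟩ := exists_Skernel_eq a ht
  refine ⟨c, hc, fun φ x hx => ?_⟩
  rw [Sop, hankelTransform, ← setIntegral_Ioi_eq_integral_powerMeasure, ← integral_const_mul]
  refine setIntegral_congr_fun measurableSet_Ioi fun y hy => ?_
  have hxy : x * y / (2 * |t|) = (2 * |t|)⁻¹ * x * y := by ring
  simp only [hS x y hx hy, hxy, Complex.real_smul, Pi.mul_apply]
  ring

theorem norm_Sop_eq (a : ℝ) (ht : t ≠ 0) (φ : ℝ → ℂ) {x : ℝ} (hx : 0 < x) :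
    ‖Sop a t φ x‖ = (2 * |t|) ^ (-(a + 1) / 2) *
      ‖hankelTransform a (chirp (4 * t)⁻¹ * φ) ((2 * |t|)⁻¹ * x)‖ := by
  obtain ⟨c, hc, hS⟩ := exists_Sop_eq a ht
  rw [hS φ x hx, norm_mul, norm_mul, norm_mul, hc, norm_chirp, Complex.norm_real,
    Real.norm_of_nonneg (by positivity), one_mul, mul_one]

theorem aestronglyMeasurable_Sop (ha : 0 ≤ a) (ht : t ≠ 0) (hφ : Integrable φ (powerMeasure a)) :
    AEStronglyMeasurable (Sop a t φ) (powerMeasure a) := by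
  obtain ⟨c, -, hS⟩ := exists_Sop_eq a ht
  have hH := continuous_hankelTransform ha (integrable_chirp_mul (4 * t)⁻¹ hφ)
  have hcont : Continuous fun x => c * ((2 * |t|) ^ (-(a + 1) / 2) : ℝ) * chirp (4 * t)⁻¹ x *
      hankelTransform a (chirp (4 * t)⁻¹ * φ) ((2 * |t|)⁻¹ * x) := by
    have := continuous_chirp (4 * t)⁻¹
    fun_prop
  refine hcont.aestronglyMeasurable.congr ?_
  filter_upwards [ae_powerMeasure_pos a] with x hx using (hS φ x hx).symm

theorem eLpNorm_Sop (ha : 0 ≤ a) (hr : 0 < r) (ht : t ≠ 0)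
    (hφ : Integrable φ (powerMeasure a)) :
    eLpNorm (Sop a t φ) (ENNReal.ofReal r) (powerMeasure a) =
      ENNReal.ofReal ((2 * |t|) ^ (-(a + 1) * (1 / 2 - 1 / r))) *
        eLpNorm (hankelTransform a (chirp (4 * t)⁻¹ * φ)) (ENNReal.ofReal r) (powerMeasure a) := by
  set H := hankelTransform a (chirp (4 * t)⁻¹ * φ)
  have hH : Continuous H := continuous_hankelTransform ha (integrable_chirp_mul _ hφ)
  have ht' : 0 < 2 * |t| := by positivity
  calc eLpNorm (Sop a t φ) (ENNReal.ofReal r) (powerMeasure a)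
      = eLpNorm ((2 * |t|) ^ (-(a + 1) / 2) • fun x => H ((2 * |t|)⁻¹ * x))
          (ENNReal.ofReal r) (powerMeasure a) := by
        refine eLpNorm_congr_norm_ae ?_
        filter_upwards [ae_powerMeasure_pos a] with x hx
        rw [norm_Sop_eq a ht φ hx, Pi.smul_apply, norm_smul,
          Real.norm_of_nonneg (by positivity)]
    _ = ENNReal.ofReal ((2 * |t|) ^ (-(a + 1) / 2)) *
          (ENNReal.ofReal ((2 * |t|)⁻¹ ^ (-(a + 1) / r)) *
            eLpNorm H (ENNReal.ofReal r) (powerMeasure a)) := by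
        rw [eLpNorm_const_smul, Real.enorm_of_nonneg (by positivity),
          eLpNorm_comp_mul_left_powerMeasure a (inv_pos.2 ht') hr hH.aestronglyMeasurable]
    _ = _ := by
        rw [← mul_assoc, ← ENNReal.ofReal_mul (by positivity), Real.inv_rpow ht'.le,
          ← Real.rpow_neg ht'.le, ← Real.rpow_add ht']
        congr 3
        ring

theorem exists_eLpNorm_Sop_le (ha : 0 ≤ a) (hrq : r.HolderConjugate q) (hr : 2 ≤ r) :
    ∃ C : NNReal, ∀ t : ℝ, t ≠ 0 → ∀ φ, Integrable φ (powerMeasure a) →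
      MemLp φ (ENNReal.ofReal q) (powerMeasure a) →
      eLpNorm (Sop a t φ) (ENNReal.ofReal r) (powerMeasure a) ≤
        ENNReal.ofReal ((2 * |t|) ^ (-(a + 1) * (1 / 2 - 1 / r))) *
          (C * eLpNorm φ (ENNReal.ofReal q) (powerMeasure a)) := by
  obtain ⟨C, hC⟩ := exists_eLpNorm_hankelTransform_le ha hrq hr
  refine ⟨C, fun t ht φ hφ hφq => ?_⟩
  have hψ : Integrable (chirp (4 * t)⁻¹ * φ) (powerMeasure a) := integrable_chirp_mul _ hφ
  have hψq : MemLp (chirp (4 * t)⁻¹ * φ) (ENNReal.ofReal q) (powerMeasure a) :=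
    ⟨hψ.aestronglyMeasurable, (eLpNorm_chirp_mul _ _).trans_lt hφq.2⟩
  rw [eLpNorm_Sop ha hrq.pos ht hφ, ← eLpNorm_chirp_mul (φ := φ) (4 * t)⁻¹]
  exact mul_le_mul_right (hC _ hψ hψq) _

theorem LrA_eq_toReal_eLpNorm (hr : 0 < r) (hf : AEStronglyMeasurable f (powerMeasure a)) :
    LrA a r f = (eLpNorm f (ENNReal.ofReal r) (powerMeasure a)).toReal := by
  rw [toReal_eLpNorm hf, lpNorm_eq_integral_norm_rpow_toReal (by simpa using hr)
    ENNReal.ofReal_ne_top hf, ENNReal.toReal_ofReal hr.le, LrA, one_div,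
    ← setIntegral_Ioi_eq_integral_powerMeasure]
  simp only [smul_eq_mul, mul_comm]

end Schrodinger

section Schwartz

variable {a : ℝ} {φ : ℝ → ℂ}

theorem SPlus.exists_pow_mul_norm_le (hφ : SPlus φ) (m : ℕ) :
    ∃ C, ∀ y > 0, y ^ m * ‖φ y‖ ≤ C := by
  obtain ⟨C, hC⟩ := hφ.2 m 0
  refine ⟨C, fun y hy => ?_⟩
  simpa only [DIter, norm_mul, norm_pow, Complex.norm_real, Real.norm_of_nonneg hy.le]
    using hC y hy

theorem rpow_le_one_add_pow_ceil {y : ℝ} (ha : 0 ≤ a) (hy : 0 ≤ y) : y ^ a ≤ 1 + y ^ ⌈a⌉₊ := by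
  rcases le_total y 1 with h | h
  · exact (Real.rpow_le_one hy h ha).trans (le_add_of_nonneg_right (by positivity))
  · calc y ^ a ≤ y ^ (⌈a⌉₊ : ℝ) := Real.rpow_le_rpow_of_exponent_le h (Nat.le_ceil a)
      _ ≤ 1 + y ^ ⌈a⌉₊ := by
        rw [Real.rpow_natCast]
        exact le_add_of_nonneg_left zero_le_one

theorem SPlus.integrable (hφ : SPlus φ) (ha : 0 ≤ a) : Integrable φ (powerMeasure a) := by
  obtain ⟨C₀, h₀⟩ := hφ.exists_pow_mul_norm_le 0
  obtain ⟨C₁, h₁⟩ := hφ.exists_pow_mul_norm_le 2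
  obtain ⟨C₂, h₂⟩ := hφ.exists_pow_mul_norm_le ⌈a⌉₊
  obtain ⟨C₃, h₃⟩ := hφ.exists_pow_mul_norm_le (⌈a⌉₊ + 2)
  have hφ_meas : AEStronglyMeasurable φ (volume.restrict (Ioi 0)) :=
    hφ.1.continuousOn.aestronglyMeasurable measurableSet_Ioi
  have hpow_meas : Measurable fun y : ℝ => y ^ a := by fun_prop
  rw [integrable_powerMeasure_iff]
  refine Integrable.mono' (integrable_inv_one_add_sq.const_mul (C₀ + C₁ + C₂ + C₃)).integrableOn
    (hpow_meas.aestronglyMeasurable.smul hφ_meas) ?_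
  filter_upwards [ae_restrict_mem measurableSet_Ioi] with y hy
  have hy₀ : 0 < y := hy
  rw [norm_smul, Real.norm_of_nonneg (by positivity), ← div_eq_mul_inv,
    le_div_iff₀ (by positivity)]
  calc y ^ a * ‖φ y‖ * (1 + y ^ 2)
      ≤ (1 + y ^ ⌈a⌉₊) * ‖φ y‖ * (1 + y ^ 2) := by
        gcongr
        exact rpow_le_one_add_pow_ceil ha hy₀.le
    _ = y ^ 0 * ‖φ y‖ + y ^ 2 * ‖φ y‖ + y ^ ⌈a⌉₊ * ‖φ y‖ + y ^ (⌈a⌉₊ + 2) * ‖φ y‖ := by ring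
    _ ≤ C₀ + C₁ + C₂ + C₃ := by
        gcongr
        exacts [h₀ y hy, h₁ y hy, h₂ y hy, h₃ y hy]

theorem memLp_of_integrable_of_norm_le {α E : Type*} [MeasurableSpace α] {μ : Measure α}
    [NormedAddCommGroup E] {f : α → E} {q C : ℝ} (hq : 1 ≤ q) (hf : Integrable f μ)
    (hfC : ∀ᵐ x ∂μ, ‖f x‖ ≤ C) : MemLp f (ENNReal.ofReal q) μ := by
  have hq₀ : 0 < q := one_pos.trans_le hq
  rw [← integrable_norm_rpow_iff hf.aestronglyMeasurable (by simpa using hq₀)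
    ENNReal.ofReal_ne_top, ENNReal.toReal_ofReal hq₀.le]
  refine (hf.norm.const_mul (C ^ (q - 1))).mono'
    (hf.aestronglyMeasurable.norm.aemeasurable.pow_const q).aestronglyMeasurable ?_
  filter_upwards [hfC] with x hx
  rw [Real.norm_of_nonneg (by positivity)]
  calc ‖f x‖ ^ q = ‖f x‖ ^ (q - 1) * ‖f x‖ := by
        conv_lhs => rw [← sub_add_cancel q 1, Real.rpow_add_of_nonneg (norm_nonneg _)
          (sub_nonneg.2 hq) zero_le_one, Real.rpow_one]
    _ ≤ C ^ (q - 1) * ‖f x‖ := by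
        gcongr

theorem SPlus.memLp (hφ : SPlus φ) (ha : 0 ≤ a) {q : ℝ} (hq : 1 ≤ q) :
    MemLp φ (ENNReal.ofReal q) (powerMeasure a) := by
  obtain ⟨C, hC⟩ := hφ.exists_pow_mul_norm_le 0
  refine memLp_of_integrable_of_norm_le (C := C) hq (hφ.integrable ha) ?_
  filter_upwards [ae_powerMeasure_pos a] with y hy
  simpa only [pow_zero, one_mul] using hC y hy

end Schwartz

theorem dispersive_Lr_estimate_general (a r : ℝ) (ha : 0 ≤ a) (hr : 2 ≤ r) :
    ∃ C > (0:ℝ), ∀ t : ℝ, t ≠ 0 → ∀ φ : ℝ → ℂ, Integrable φ (powerMeasure a) →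
      MemLp φ (ENNReal.ofReal (r / (r - 1))) (powerMeasure a) →
      LrA a r (Sop a t φ) ≤
        C * |t| ^ (-(a + 1) * (1 / 2 - 1 / r)) * LrA a (r / (r - 1)) φ := by
  have hrq : r.HolderConjugate (r / (r - 1)) := .conjExponent (by linarith)
  obtain ⟨C, hC⟩ := exists_eLpNorm_Sop_le ha hrq hr
  refine ⟨2 ^ (-(a + 1) * (1 / 2 - 1 / r)) * (C + 1), by positivity, fun t ht φ hφ hφq => ?_⟩
  have hSφ := ENNReal.toReal_mono (by finiteness [hφq.2]) (hC t ht φ hφ hφq)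
  rw [ENNReal.toReal_mul, ENNReal.toReal_mul, ENNReal.coe_toReal,
    ENNReal.toReal_ofReal (by positivity), ← LrA_eq_toReal_eLpNorm hrq.symm.pos hφq.1,
    ← LrA_eq_toReal_eLpNorm hrq.pos (aestronglyMeasurable_Sop ha ht hφ),
    Real.mul_rpow zero_le_two (abs_nonneg t)] at hSφ
  have hφ₀ : 0 ≤ LrA a (r / (r - 1)) φ :=
    LrA_eq_toReal_eLpNorm hrq.symm.pos hφq.1 ▸ ENNReal.toReal_nonneg
  calc LrA a r (Sop a t φ)
      ≤ 2 ^ (-(a + 1) * (1 / 2 - 1 / r)) * |t| ^ (-(a + 1) * (1 / 2 - 1 / r)) *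
          (C * LrA a (r / (r - 1)) φ) := hSφ
    _ ≤ 2 ^ (-(a + 1) * (1 / 2 - 1 / r)) * |t| ^ (-(a + 1) * (1 / 2 - 1 / r)) *
          ((C + 1) * LrA a (r / (r - 1)) φ) := by
        gcongr
        exact le_add_of_nonneg_right zero_le_one
    _ = _ := by ring

/-- Interpolated dispersive estimate for `a ≥ 0` and `r ≥ 2`:
`‖S_a(t)φ‖_{L^r_a} ≤ C(a,r)|t|^{-(a+1)(1/2-1/r)}‖φ‖_{L^{r'}_a}`. -/
theorem dispersive_Lr_estimate (a r : ℝ) (ha : 0 ≤ a) (hr : 2 ≤ r) :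
    ∃ C > (0:ℝ), ∀ t : ℝ, t ≠ 0 → ∀ φ : ℝ → ℂ, SPlus φ →
      LrA a r (Sop a t φ) ≤
        C * |t| ^ (-(a + 1) * (1 / 2 - 1 / r)) * LrA a (r / (r - 1)) φ := by
  obtain ⟨C, hC, h⟩ := dispersive_Lr_estimate_general a r ha hr
  have hq : 1 ≤ r / (r - 1) := (one_le_div (by linarith)).2 (by linarith)
  exact ⟨C, hC, fun t ht φ hφ => h t ht φ (hφ.integrable ha) (hφ.memLp ha hq)⟩
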